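/- For every δ > 0 there exists a constant C = C(δ) > 0, independent of k and of F, such that: for every k ∈ ℕ and every k-times continuously differentiable F : ℝ → ℝ with F^(ℓ) ∈ L²(π₁) for all ℓ ≤ k, one has ‖F^(k)‖_{L²(π₁)} ≤ C · sup_{m ≥ k} (1 + m^{k/2 + 1/2 + δ}) |ĉ_m(F)|. -/

import Mathlib

open MeasureTheory ProbabilityTheory Real Filter

/-- The standard Gaussian measure `π₁` on `ℝ`. -/
noncomputable def stdGaussian : Measure ℝ := gaussianReal 0 1

/-- The `m`-th probabilists' Hermite polynomial `He_m`, evaluated at `x`. -/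
noncomputable def He (m : ℕ) (x : ℝ) : ℝ := Polynomial.aeval x (Polynomial.hermite m)

/-- The normalised Hermite coefficients `ĉ_m(F)`. -/
noncomputable def hermiteCoeff (F : ℝ → ℝ) (m : ℕ) : ℝ :=
  (Real.sqrt (Nat.factorial m))⁻¹ * ∫ x, F x * He m x ∂stdGaussian

/-!
Let `γ` be the standard Gaussian measure. Stein's identity `∫ x f dγ = ∫ f' dγ`, applied to the
product of a function and a polynomial, says that `p ↦ X p - p'` is the adjoint of differentiation
in `L²(γ)`. Since `He_{m+1} = X He_m - He_m'`, the `j`-th normalised Hermite coefficient of `F^(k)`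
is `√((j+k)! / j!)` times the `(j+k)`-th coefficient of `F`. The same identity gives orthogonality
of the Hermite polynomials. They are complete because a function in `L²(γ)` with vanishing moments
has, by expanding the exponential, vanishing Fourier transform. Parseval's identity then yields
`‖F^(k)‖² = ∑_{m ≥ k} m (m-1) ⋯ (m-k+1) ĉ_m(F)²`, and the decay hypothesis bounds each term by
`B² max(m, 1)^{-(1+2δ)}`, which is summable uniformly in `k`.
-/

section Series

lemma rpow_max_one_le_one_add_rpow {x : ℝ} (hx : 0 ≤ x) (s : ℝ) : max x 1 ^ s ≤ 1 + x ^ s := by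
  rcases max_choice x 1 with h | h <;> rw [h]
  · exact le_add_of_nonneg_left zero_le_one
  · simpa only [one_rpow] using le_add_of_nonneg_right (rpow_nonneg hx s)

lemma summable_max_one_rpow_neg {p : ℝ} (hp : 1 < p) :
    Summable fun m : ℕ ↦ max (m : ℝ) 1 ^ (-p) := by
  rw [← summable_nat_add_iff 1]
  simpa using (summable_nat_add_iff 1).2 (Real.summable_nat_rpow.2 (neg_lt_neg hp))

lemma descFactorial_mul_sq_le {k m : ℕ} {δ c B : ℝ}
    (h : (1 + (m : ℝ) ^ ((k : ℝ) / 2 + 1 / 2 + δ)) * |c| ≤ B) :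
    (m.descFactorial k : ℝ) * c ^ 2 ≤ B ^ 2 * max (m : ℝ) 1 ^ (-(1 + 2 * δ)) := by
  set M : ℝ := max (m : ℝ) 1
  have hM : 0 < M := lt_max_of_lt_right zero_lt_one
  have h_desc : (m.descFactorial k : ℝ) ≤ M ^ k := calc
    (m.descFactorial k : ℝ) ≤ (m : ℝ) ^ k := mod_cast Nat.descFactorial_le_pow m k
    _ ≤ M ^ k := by gcongr; exact le_max_left _ _
  have h_coeff : M ^ ((k : ℝ) / 2 + 1 / 2 + δ) * |c| ≤ B :=
    le_trans (by gcongr; exact rpow_max_one_le_one_add_rpow m.cast_nonneg _) h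
  have h_exponent :
      M ^ k = (M ^ ((k : ℝ) / 2 + 1 / 2 + δ)) ^ 2 * M ^ (-(1 + 2 * δ)) := by
    rw [← rpow_natCast, ← rpow_mul_natCast hM.le, ← rpow_add hM]
    congr 1
    push_cast
    ring
  calc (m.descFactorial k : ℝ) * c ^ 2
    _ ≤ M ^ k * c ^ 2 := by gcongr
    _ = (M ^ ((k : ℝ) / 2 + 1 / 2 + δ) * |c|) ^ 2 * M ^ (-(1 + 2 * δ)) := by
        rw [h_exponent, mul_pow, sq_abs]
        ring
    _ ≤ B ^ 2 * M ^ (-(1 + 2 * δ)) := by gcongr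

end Series

section Polynomial

open Polynomial

lemma iterate_derivative_natDegree_self {R : Type*} [Semiring R] (p : R[X]) :
    derivative^[p.natDegree] p = C (p.natDegree.factorial • p.leadingCoeff) := by
  have h_degree : (derivative^[p.natDegree] p).natDegree = 0 := by
    simpa using natDegree_iterate_derivative p p.natDegree
  rw [eq_C_of_natDegree_eq_zero h_degree, coeff_iterate_derivative, zero_add,
    Nat.descFactorial_self, leadingCoeff]

lemma iteratedDeriv_eval (p : ℝ[X]) (n : ℕ) :
    iteratedDeriv n (fun x ↦ p.eval x) = fun x ↦ (derivative^[n] p).eval x := by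
  induction n with
  | zero => simp
  | succ n ih =>
    rw [iteratedDeriv_succ, ih, Function.iterate_succ_apply']
    exact funext fun x ↦ Polynomial.deriv _

end Polynomial

section FourierUniqueness

variable {E : Type*} [NormedAddCommGroup E] [InnerProductSpace ℝ E] [MeasurableSpace E]
  {μ : Measure E} {G : E → ℝ}

lemma charFun_withDensity_ofReal (hG : AEMeasurable G μ) (t : E) :
    charFun (μ.withDensity fun x ↦ ENNReal.ofReal (G x)) t =
      ∫ x, ((max (G x) 0 : ℝ) : ℂ) * Complex.exp (inner ℝ x t * Complex.I) ∂μ := by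
  rw [charFun_apply,
    integral_withDensity_eq_integral_toReal_smul₀ hG.ennreal_ofReal (by simp)]
  simp only [ENNReal.toReal_ofReal', Complex.real_smul]

lemma integrable_ofReal_mul_exp_inner [OpensMeasurableSpace E] (hG : Integrable G μ) (t : E) :
    Integrable (fun x ↦ (G x : ℂ) * Complex.exp (inner ℝ x t * Complex.I)) μ :=
  hG.ofReal.mul_bdd (c := 1) (by fun_prop)
    (ae_of_all _ fun x ↦ (Complex.norm_exp_ofReal_mul_I _).le)

-- The positive and the negative part of `G` are densities of finite measures with the same
-- characteristic function.
lemma ae_eq_zero_of_forall_integral_mul_exp_inner_eq_zero [BorelSpace E]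
    [SecondCountableTopology E] [CompleteSpace E] (hG : Integrable G μ)
    (h : ∀ t : E, ∫ x, (G x : ℂ) * Complex.exp (inner ℝ x t * Complex.I) ∂μ = 0) :
    G =ᵐ[μ] 0 := by
  have := isFiniteMeasure_withDensity_ofReal hG.2
  have := isFiniteMeasure_withDensity_ofReal hG.neg.2
  have h_measure : μ.withDensity (fun x ↦ ENNReal.ofReal (G x)) =
      μ.withDensity (fun x ↦ ENNReal.ofReal ((-G) x)) := by
    refine Measure.ext_of_charFun (funext fun t ↦ ?_)
    rw [charFun_withDensity_ofReal hG.aemeasurable,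
      charFun_withDensity_ofReal hG.neg.aemeasurable, ← sub_eq_zero,
      ← integral_sub (integrable_ofReal_mul_exp_inner hG.pos_part t)
        (integrable_ofReal_mul_exp_inner hG.neg.pos_part t), ← h t]
    simp only [Pi.neg_apply, ← sub_mul, ← Complex.ofReal_sub, max_zero_sub_max_neg_zero_eq_self]
  rw [withDensity_eq_iff hG.aemeasurable.ennreal_ofReal hG.neg.aemeasurable.ennreal_ofReal
    hG.lintegral_lt_top.ne] at h_measure
  filter_upwards [h_measure] with x hx
  have h_parts : max (G x) 0 = max (-G x) 0 := by
    simpa only [Pi.neg_apply, ENNReal.toReal_ofReal'] using congrArg ENNReal.toReal hx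
  rw [Pi.zero_apply, ← max_zero_sub_max_neg_zero_eq_self (G x), h_parts, sub_self]

end FourierUniqueness

section Moments

variable {μ : Measure ℝ} {G : ℝ → ℝ}

lemma integral_mul_exp_eq_zero_of_moments_eq_zero
    (hG : ∀ t : ℝ, Integrable (fun x ↦ G x * rexp (t * |x|)) μ)
    (h : ∀ n : ℕ, ∫ x, G x * x ^ n ∂μ = 0) (t : ℝ) :
    ∫ x, (G x : ℂ) * Complex.exp (t * x * Complex.I) ∂μ = 0 := by
  have hG_meas : AEStronglyMeasurable G μ := by simpa using (hG 0).1
  have h_moment (n : ℕ) :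
      ∫ x, (G x : ℂ) * ((t * x * Complex.I) ^ n / n.factorial) ∂μ = 0 := calc
    _ = ∫ x, ((G x * x ^ n : ℝ) : ℂ) * ((t * Complex.I) ^ n / n.factorial) ∂μ := by
        congr with x
        push_cast
        ring
    _ = 0 := by rw [integral_mul_const, integral_complex_ofReal, h n, Complex.ofReal_zero, zero_mul]
  have h_sum : HasSum
      (fun n : ℕ ↦ ∫ x, (G x : ℂ) * ((t * x * Complex.I) ^ n / n.factorial) ∂μ)
      (∫ x, (G x : ℂ) * Complex.exp (t * x * Complex.I) ∂μ) := by
    refine hasSum_integral_of_dominated_convergence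
      (fun n x ↦ |G x| * ((|t| * |x|) ^ n / n.factorial))
      (fun n ↦ (Complex.continuous_ofReal.comp_aestronglyMeasurable hG_meas).mul (by fun_prop))
      (fun n ↦ ae_of_all _ fun x ↦ by simp [mul_pow])
      (ae_of_all _ fun x ↦ (Real.summable_pow_div_factorial _).mul_left _)
      ((hG |t|).abs.congr (ae_of_all _ fun x ↦ ?_)) (ae_of_all _ fun x ↦ ?_)
    · have h_exp : ∑' n : ℕ, (|t| * |x|) ^ n / n.factorial = rexp (|t| * |x|) := by
        simp only [Real.exp_eq_exp_ℝ, NormedSpace.exp_eq_tsum_div]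
      simp only [tsum_mul_left, h_exp, abs_mul, abs_exp]
    · simpa only [Complex.exp_eq_exp_ℂ] using
        (NormedSpace.expSeries_div_hasSum_exp (t * x * Complex.I : ℂ)).mul_left (G x : ℂ)
  exact h_sum.unique (by simpa only [h_moment] using hasSum_zero)

lemma ae_eq_zero_of_moments_eq_zero
    (hG : ∀ t : ℝ, Integrable (fun x ↦ G x * rexp (t * |x|)) μ)
    (h : ∀ n : ℕ, ∫ x, G x * x ^ n ∂μ = 0) : G =ᵐ[μ] 0 := by
  refine ae_eq_zero_of_forall_integral_mul_exp_inner_eq_zero (by simpa using hG 0) fun t ↦ ?_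
  simpa using integral_mul_exp_eq_zero_of_moments_eq_zero hG h t

lemma integrable_eval (hμ : 0 ∈ interior (integrableExpSet id μ)) (p : Polynomial ℝ) :
    Integrable (fun x ↦ p.eval x) μ := by
  simp only [Polynomial.eval_eq_sum, Polynomial.sum]
  exact integrable_finsetSum _ fun n _ ↦
    (integrable_pow_of_mem_interior_integrableExpSet hμ n).const_mul _

lemma memLp_two_eval (hμ : 0 ∈ interior (integrableExpSet id μ)) (p : Polynomial ℝ) :
    MemLp (fun x ↦ p.eval x) 2 μ := by
  rw [memLp_two_iff_integrable_sq (by fun_prop)]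
  exact (integrable_eval hμ (p ^ 2)).congr (ae_of_all _ fun x ↦ Polynomial.eval_pow 2)

lemma memLp_two_exp_mul_abs (hμ : integrableExpSet id μ = Set.univ) (t : ℝ) :
    MemLp (fun x ↦ rexp (t * |x|)) 2 μ := by
  have h_exp (s : ℝ) : Integrable (fun x ↦ rexp (s * x)) μ := by
    have : s ∈ integrableExpSet id μ := hμ ▸ Set.mem_univ s
    exact this
  rw [memLp_two_iff_integrable_sq (by fun_prop)]
  convert integrable_exp_mul_abs (h_exp (2 * t)) (h_exp (-(2 * t))) using 2 with x
  rw [← Real.exp_nat_mul]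
  push_cast
  ring_nf

lemma ae_eq_zero_of_forall_integral_mul_eval_eq_zero (hμ : integrableExpSet id μ = Set.univ)
    (hG : MemLp G 2 μ) (h : ∀ p : Polynomial ℝ, ∫ x, G x * p.eval x ∂μ = 0) : G =ᵐ[μ] 0 :=
  ae_eq_zero_of_moments_eq_zero (fun t ↦ hG.integrable_mul (memLp_two_exp_mul_abs hμ t))
    fun n ↦ by simpa using h (Polynomial.X ^ n)

end Moments

section InnerLp

variable {α 𝕜 E : Type*} [MeasurableSpace α] {μ : Measure α} [RCLike 𝕜] [NormedAddCommGroup E]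
  [InnerProductSpace 𝕜 E]

lemma inner_toLp_toLp {f g : α → E} (hf : MemLp f 2 μ) (hg : MemLp g 2 μ) :
    inner 𝕜 (hf.toLp f) (hg.toLp g) = ∫ x, inner 𝕜 (f x) (g x) ∂μ := by
  rw [L2.inner_def]
  refine integral_congr_ae ?_
  filter_upwards [hf.coeFn_toLp, hg.coeFn_toLp] with x hfx hgx
  rw [hfx, hgx]

end InnerLp

section Stein

open scoped NNReal

variable {E : Type*} [NormedAddCommGroup E] [NormedSpace ℝ E] {m : ℝ} {v : ℝ≥0} {f f' : ℝ → E}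

lemma hasDerivAt_gaussianPDFReal (m : ℝ) (v : ℝ≥0) (x : ℝ) :
    HasDerivAt (gaussianPDFReal m v) (-((x - m) / v) * gaussianPDFReal m v x) x := by
  have h_exponent : HasDerivAt (fun y : ℝ ↦ -(y - m) ^ 2 / (2 * v)) (-((x - m) / v)) x := by
    convert! (((hasDerivAt_id x).sub_const m).pow 2).neg.div_const (2 * (v : ℝ)) using 1
    simp only [id_eq]
    ring
  rw [gaussianPDFReal_def]
  convert! h_exponent.exp.const_mul (√(2 * π * v))⁻¹ using 1
  ring

lemma integrable_gaussianPDFReal_smul (hv : v ≠ 0) (hf : Integrable f (gaussianReal m v)) :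
    Integrable fun x ↦ gaussianPDFReal m v x • f x := by
  rw [gaussianReal_of_var_ne_zero m hv, integrable_withDensity_iff_integrable_smul'
    (measurable_gaussianPDF m v) (ae_of_all _ fun _ ↦ gaussianPDF_lt_top)] at hf
  simpa only [toReal_gaussianPDF] using hf

lemma integral_sub_smul_gaussianReal (hf : ∀ x, HasDerivAt f (f' x) x)
    (hf_int : Integrable f (gaussianReal m v)) (hf'_int : Integrable f' (gaussianReal m v))
    (hxf_int : Integrable (fun x ↦ (x - m) • f x) (gaussianReal m v)) :
    ∫ x, (x - m) • f x ∂gaussianReal m v = (v : ℝ) • ∫ x, f' x ∂gaussianReal m v := by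
  rcases eq_or_ne v 0 with rfl | hv
  · rw [gaussianReal_zero_var, integral_congr_ae (ae_eq_dirac fun x ↦ (x - m) • f x)]
    simp
  have hv' : (v : ℝ) ≠ 0 := mod_cast hv
  have h_deriv (x : ℝ) : HasDerivAt (fun x ↦ gaussianPDFReal m v x • f x)
      (gaussianPDFReal m v x • (f' x - (v : ℝ)⁻¹ • (x - m) • f x)) x := by
    convert! (hasDerivAt_gaussianPDFReal m v x).fun_smul (hf x) using 1
    rw [div_eq_mul_inv]
    module
  have h_zero : ∫ x, (f' x - (v : ℝ)⁻¹ • (x - m) • f x) ∂gaussianReal m v = 0 := by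
    rw [integral_gaussianReal_eq_integral_smul hv]
    exact integral_eq_zero_of_hasDerivAt_of_integrable h_deriv
      (integrable_gaussianPDFReal_smul hv (hf'_int.sub (hxf_int.smul _)))
      (integrable_gaussianPDFReal_smul hv hf_int)
  rw [integral_sub hf'_int (hxf_int.fun_smul _), integral_smul, sub_eq_zero] at h_zero
  rw [h_zero, smul_inv_smul₀ hv']

end Stein

section Hermite

open Polynomial (C X derivative)

variable {F : ℝ → ℝ}

instance : IsProbabilityMeasure stdGaussian :=
  inferInstanceAs (IsProbabilityMeasure (gaussianReal 0 1))

lemma integrableExpSet_id_stdGaussian : integrableExpSet id stdGaussian = Set.univ :=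
  integrableExpSet_id_gaussianReal

lemma memLp_eval_stdGaussian (p : Polynomial ℝ) : MemLp (fun x ↦ p.eval x) 2 stdGaussian :=
  memLp_two_eval (by simp [integrableExpSet_id_stdGaussian]) p

lemma integral_deriv_mul_eval_stdGaussian (hF : Differentiable ℝ F)
    (hF_mem : MemLp F 2 stdGaussian) (hF'_mem : MemLp (deriv F) 2 stdGaussian) (p : Polynomial ℝ) :
    ∫ x, deriv F x * p.eval x ∂stdGaussian =
      ∫ x, F x * (X * p - derivative p).eval x ∂stdGaussian := by
  have h_int (q : Polynomial ℝ) : Integrable (fun x ↦ F x * q.eval x) stdGaussian :=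
    hF_mem.integrable_mul (memLp_eval_stdGaussian q)
  have h_int' : Integrable (fun x ↦ deriv F x * p.eval x) stdGaussian :=
    hF'_mem.integrable_mul (memLp_eval_stdGaussian p)
  have h_eval (x : ℝ) : F x * (X * p).eval x = (x - 0) • (F x * p.eval x) := by
    simp only [Polynomial.eval_mul, Polynomial.eval_X, smul_eq_mul]
    ring
  have h_stein : ∫ x, F x * (X * p).eval x ∂stdGaussian =
      ∫ x, (deriv F x * p.eval x + F x * (derivative p).eval x) ∂stdGaussian := by
    have h_int_X := h_int (X * p)
    simp only [h_eval] at h_int_X ⊢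
    have h := integral_sub_smul_gaussianReal
      (fun x ↦ (hF x).hasDerivAt.fun_mul (p.hasDerivAt x)) (h_int p) (h_int'.add (h_int _)) h_int_X
    rw [NNReal.coe_one, one_smul] at h
    exact h
  simp only [Polynomial.eval_sub, mul_sub]
  rw [integral_sub (h_int _) (h_int _), h_stein, integral_add h_int' (h_int _),
    add_sub_cancel_right]

/-- The probabilists' Hermite polynomials with real coefficients, as a sequence of polynomials
whose `m`-th term has degree `m`; evaluating its terms gives the functions `He m`. -/
noncomputable def hermiteSequence : Polynomial.Sequence ℝ where
  elems' m := (Polynomial.hermite m).map (Int.castRingHom ℝ)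
  degree_eq' m := by
    rw [(Polynomial.hermite_monic m).degree_map, Polynomial.degree_hermite]

lemma eval_hermiteSequence (m : ℕ) (x : ℝ) : (hermiteSequence m).eval x = He m x :=
  Polynomial.eval_map_algebraMap _ _

lemma hermiteSequence_monic (m : ℕ) : (hermiteSequence m).Monic :=
  (Polynomial.hermite_monic m).map _

lemma hermiteSequence_succ (m : ℕ) :
    hermiteSequence (m + 1) = X * hermiteSequence m - derivative (hermiteSequence m) := by
  simp [hermiteSequence, Polynomial.hermite_succ, Polynomial.derivative_map]

lemma span_range_hermiteSequence : Submodule.span ℝ (Set.range hermiteSequence) = ⊤ :=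
  hermiteSequence.span fun m ↦ by simp [(hermiteSequence_monic m).leadingCoeff]

lemma memLp_He (m : ℕ) : MemLp (He m) 2 stdGaussian := by
  simpa only [eval_hermiteSequence] using memLp_eval_stdGaussian (hermiteSequence m)

lemma integral_deriv_mul_He (hF : Differentiable ℝ F)
    (hF_mem : MemLp F 2 stdGaussian) (hF'_mem : MemLp (deriv F) 2 stdGaussian) (m : ℕ) :
    ∫ x, deriv F x * He m x ∂stdGaussian = ∫ x, F x * He (m + 1) x ∂stdGaussian := by
  simpa only [← hermiteSequence_succ, eval_hermiteSequence] using
    integral_deriv_mul_eval_stdGaussian hF hF_mem hF'_mem (hermiteSequence m)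

lemma integral_iteratedDeriv_mul_He {k : ℕ}
    (hF : ∀ ℓ < k, Differentiable ℝ (iteratedDeriv ℓ F))
    (hF_mem : ∀ ℓ ≤ k, MemLp (iteratedDeriv ℓ F) 2 stdGaussian) (j : ℕ) :
    ∫ x, iteratedDeriv k F x * He j x ∂stdGaussian = ∫ x, F x * He (j + k) x ∂stdGaussian := by
  induction k generalizing j with
  | zero => simp
  | succ k ih =>
    have hF'_mem : MemLp (deriv (iteratedDeriv k F)) 2 stdGaussian := by
      simpa only [iteratedDeriv_succ] using hF_mem (k + 1) le_rfl
    rw [iteratedDeriv_succ,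
      integral_deriv_mul_He (hF k k.lt_succ_self) (hF_mem k k.le_succ) hF'_mem,
      ih (fun ℓ hℓ ↦ hF ℓ (hℓ.trans k.lt_succ_self)) (fun ℓ hℓ ↦ hF_mem ℓ (hℓ.trans k.le_succ)),
      add_right_comm, add_assoc]

lemma integral_eval_mul_He (p : Polynomial ℝ) (n : ℕ) :
    ∫ x, p.eval x * He n x ∂stdGaussian = ∫ x, (derivative^[n] p).eval x ∂stdGaussian := by
  have h := integral_iteratedDeriv_mul_He (F := fun x ↦ p.eval x) (k := n)
    (fun ℓ _ ↦ by simpa only [iteratedDeriv_eval] using Polynomial.differentiable _)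
    (fun ℓ _ ↦ by simpa only [iteratedDeriv_eval] using memLp_eval_stdGaussian _) 0
  simpa [iteratedDeriv_eval, He] using h.symm

lemma integral_He_mul_He_of_lt {m n : ℕ} (hmn : m < n) :
    ∫ x, He m x * He n x ∂stdGaussian = 0 := by
  simp only [← eval_hermiteSequence m]
  rw [integral_eval_mul_He, Polynomial.iterate_derivative_eq_zero (by simpa using hmn)]
  simp

lemma integral_He_mul_He_self (n : ℕ) :
    ∫ x, He n x * He n x ∂stdGaussian = n.factorial := by
  have h_deriv : derivative^[n] (hermiteSequence n) = C (n.factorial : ℝ) := by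
    simpa [(hermiteSequence_monic n).leadingCoeff] using
      iterate_derivative_natDegree_self (hermiteSequence n)
  have h := integral_eval_mul_He (hermiteSequence n) n
  simpa [h_deriv, eval_hermiteSequence] using h

lemma integral_mul_eval_eq_zero_of_integral_mul_He_eq_zero (hF : MemLp F 2 stdGaussian)
    (h : ∀ n, ∫ x, F x * He n x ∂stdGaussian = 0) (p : Polynomial ℝ) :
    ∫ x, F x * p.eval x ∂stdGaussian = 0 := by
  have h_int (q : Polynomial ℝ) : Integrable (fun x ↦ F x * q.eval x) stdGaussian :=
    hF.integrable_mul (memLp_eval_stdGaussian q)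
  have hp : p ∈ Submodule.span ℝ (Set.range hermiteSequence) := by
    simp [span_range_hermiteSequence]
  induction hp using Submodule.span_induction with
  | mem q hq =>
    obtain ⟨n, rfl⟩ := hq
    simpa only [eval_hermiteSequence] using h n
  | zero => simp
  | add q r _ _ hq hr =>
    simp only [Polynomial.eval_add, mul_add]
    rw [integral_add (h_int q) (h_int r), hq, hr, add_zero]
  | smul a q _ hq =>
    simp only [Polynomial.eval_smul, smul_eq_mul, mul_left_comm _ a]
    rw [integral_const_mul, hq, mul_zero]

lemma ae_eq_zero_of_integral_mul_He_eq_zero (hF : MemLp F 2 stdGaussian)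
    (h : ∀ n, ∫ x, F x * He n x ∂stdGaussian = 0) : F =ᵐ[_root_.stdGaussian] 0 :=
  ae_eq_zero_of_forall_integral_mul_eval_eq_zero integrableExpSet_id_stdGaussian hF
    (integral_mul_eval_eq_zero_of_integral_mul_He_eq_zero hF h)

end Hermite

section HermiteBasis

variable {F : ℝ → ℝ}

/-- The normalised Hermite polynomial `He_n / √(n!)` as an element of `L²` of the standard
Gaussian measure. -/
noncomputable def hermiteLp (n : ℕ) : Lp ℝ 2 stdGaussian :=
  (√(n.factorial : ℝ))⁻¹ • (memLp_He n).toLp (He n)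

lemma inner_hermiteLp_toLp (hF : MemLp F 2 stdGaussian) (n : ℕ) :
    inner ℝ (hermiteLp n) (hF.toLp F) = hermiteCoeff F n := by
  rw [hermiteLp, real_inner_smul_left, inner_toLp_toLp]
  rfl

lemma hermiteCoeff_eq_zero_iff (n : ℕ) :
    hermiteCoeff F n = 0 ↔ ∫ x, F x * He n x ∂stdGaussian = 0 := by
  have : √(n.factorial : ℝ) ≠ 0 := by positivity
  simp [hermiteCoeff, this]

lemma hermiteCoeff_He (m n : ℕ) :
    hermiteCoeff (He m) n = if m = n then √(m.factorial : ℝ) else 0 := by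
  split_ifs with hmn
  · subst hmn
    rw [hermiteCoeff, integral_He_mul_He_self, inv_mul_eq_div, div_sqrt]
  · rw [hermiteCoeff_eq_zero_iff]
    rcases lt_or_gt_of_ne hmn with hlt | hgt
    · exact integral_He_mul_He_of_lt hlt
    · simpa only [mul_comm] using integral_He_mul_He_of_lt hgt

lemma orthonormal_hermiteLp : Orthonormal ℝ hermiteLp := by
  rw [orthonormal_iff_ite]
  intro m n
  have h_ne : √(n.factorial : ℝ) ≠ 0 := by positivity
  rw [hermiteLp.eq_def n, real_inner_smul_right, inner_hermiteLp_toLp, hermiteCoeff_He]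
  simp only [mul_ite, inv_mul_cancel₀ h_ne, mul_zero, eq_comm]

lemma span_range_hermiteLp_orthogonal : (Submodule.span ℝ (Set.range hermiteLp))ᗮ = ⊥ := by
  rw [Submodule.eq_bot_iff]
  intro g hg
  refine (Lp.eq_zero_iff_ae_eq_zero).2
    (ae_eq_zero_of_integral_mul_He_eq_zero (Lp.memLp g) fun n ↦ ?_)
  rw [← hermiteCoeff_eq_zero_iff, ← inner_hermiteLp_toLp (Lp.memLp g), Lp.toLp_coeFn]
  exact hg _ (Submodule.subset_span ⟨n, rfl⟩)

lemma hasSum_hermiteCoeff_sq (hF : MemLp F 2 stdGaussian) :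
    HasSum (fun n ↦ hermiteCoeff F n ^ 2) (∫ x, F x ^ 2 ∂stdGaussian) := by
  have h := (HilbertBasis.mkOfOrthogonalEqBot orthonormal_hermiteLp
    span_range_hermiteLp_orthogonal).hasSum_inner_mul_inner (hF.toLp F) (hF.toLp F)
  simp only [HilbertBasis.coe_mkOfOrthogonalEqBot, real_inner_comm (hermiteLp _),
    inner_hermiteLp_toLp, inner_toLp_toLp] at h
  simpa [sq] using h

lemma hermiteCoeff_iteratedDeriv {k : ℕ} (hF : ∀ ℓ < k, Differentiable ℝ (iteratedDeriv ℓ F))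
    (hF_mem : ∀ ℓ ≤ k, MemLp (iteratedDeriv ℓ F) 2 stdGaussian) (j : ℕ) :
    hermiteCoeff (iteratedDeriv k F) j =
      √((j + k).descFactorial k : ℝ) * hermiteCoeff F (j + k) := by
  have h_factorial : ((j + k).factorial : ℝ) = j.factorial * (j + k).descFactorial k := by
    exact_mod_cast (Nat.add_sub_cancel j k ▸
      Nat.factorial_mul_descFactorial (Nat.le_add_left k j)).symm
  have h_ne : √((j + k).descFactorial k : ℝ) ≠ 0 := by
    have := Nat.descFactorial_pos.2 (Nat.le_add_left k j)
    positivity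
  rw [hermiteCoeff, hermiteCoeff, integral_iteratedDeriv_mul_He hF hF_mem, h_factorial,
    sqrt_mul (Nat.cast_nonneg _)]
  field_simp

end HermiteBasis

lemma integral_iteratedDeriv_sq_le {δ B : ℝ} (hδ : 0 < δ) {k : ℕ} {F : ℝ → ℝ}
    (hF : ∀ ℓ < k, Differentiable ℝ (iteratedDeriv ℓ F))
    (hF_mem : ∀ ℓ ≤ k, MemLp (iteratedDeriv ℓ F) 2 stdGaussian)
    (hB : ∀ m : ℕ, k ≤ m →
      (1 + (m : ℝ) ^ ((k : ℝ) / 2 + 1 / 2 + δ)) * |hermiteCoeff F m| ≤ B) :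
    ∫ x, iteratedDeriv k F x ^ 2 ∂stdGaussian ≤
      B ^ 2 * ∑' m : ℕ, max (m : ℝ) 1 ^ (-(1 + 2 * δ)) := by
  have h_summable := summable_max_one_rpow_neg (p := 1 + 2 * δ) (by linarith)
  have h_term (j : ℕ) : hermiteCoeff (iteratedDeriv k F) j ^ 2 ≤
      B ^ 2 * max ((j + k : ℕ) : ℝ) 1 ^ (-(1 + 2 * δ)) := by
    rw [hermiteCoeff_iteratedDeriv hF hF_mem, mul_pow, sq_sqrt (Nat.cast_nonneg _)]
    exact descFactorial_mul_sq_le (hB _ (Nat.le_add_left k j))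
  calc ∫ x, iteratedDeriv k F x ^ 2 ∂stdGaussian
    _ ≤ B ^ 2 * ∑' j : ℕ, max ((j + k : ℕ) : ℝ) 1 ^ (-(1 + 2 * δ)) :=
        hasSum_le h_term (hasSum_hermiteCoeff_sq (hF_mem k le_rfl))
          (((summable_nat_add_iff k).2 h_summable).hasSum.mul_left _)
    _ ≤ B ^ 2 * ∑' m : ℕ, max (m : ℝ) 1 ^ (-(1 + 2 * δ)) := by
        refine mul_le_mul_of_nonneg_left ?_ (sq_nonneg B)
        exact tsum_comp_le_tsum_of_inj h_summable (fun m ↦ by positivity)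
          (add_left_injective k)

theorem stmt4_general (δ : ℝ) (hδ : 0 < δ) :
    ∃ C > 0, ∀ (k : ℕ) (F : ℝ → ℝ), (∀ ℓ < k, Differentiable ℝ (iteratedDeriv ℓ F)) →
      (∀ ℓ ≤ k, MemLp (iteratedDeriv ℓ F) 2 stdGaussian) →
      ∀ B : ℝ,
        (∀ m : ℕ, k ≤ m →
          (1 + (m : ℝ) ^ ((k : ℝ) / 2 + 1 / 2 + δ)) * |hermiteCoeff F m| ≤ B) →
        Real.sqrt (∫ x, (iteratedDeriv k F x) ^ 2 ∂stdGaussian) ≤ C * B := by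
  set S : ℝ := ∑' m : ℕ, max (m : ℝ) 1 ^ (-(1 + 2 * δ))
  have hS : 0 < S := (summable_max_one_rpow_neg (by linarith)).tsum_pos
    (fun m ↦ by positivity) 0 (by positivity)
  refine ⟨√S, sqrt_pos.2 hS, fun k F hF hF_mem B hB ↦ ?_⟩
  have hB_nonneg : 0 ≤ B := le_trans (by positivity) (hB k le_rfl)
  calc √(∫ x, iteratedDeriv k F x ^ 2 ∂stdGaussian)
    _ ≤ √(B ^ 2 * S) := sqrt_le_sqrt (integral_iteratedDeriv_sq_le hδ hF hF_mem hB)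
    _ = √S * B := by rw [sqrt_mul (sq_nonneg B), sqrt_sq hB_nonneg, mul_comm]

theorem stmt4 (δ : ℝ) (hδ : 0 < δ) :
    ∃ C > 0, ∀ (k : ℕ) (F : ℝ → ℝ), ContDiff ℝ k F →
      (∀ ℓ ≤ k, MemLp (iteratedDeriv ℓ F) 2 stdGaussian) →
      ∀ B : ℝ,
        (∀ m : ℕ, k ≤ m →
          (1 + (m : ℝ) ^ ((k : ℝ) / 2 + 1 / 2 + δ)) * |hermiteCoeff F m| ≤ B) →
        Real.sqrt (∫ x, (iteratedDeriv k F x) ^ 2 ∂stdGaussian) ≤ C * B := by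
  obtain ⟨C, hC, h⟩ := stmt4_general δ hδ
  exact ⟨C, hC, fun k F hF ↦ h k F fun ℓ hℓ ↦
    hF.differentiable_iteratedDeriv ℓ (mod_cast hℓ)⟩
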